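/- Let u^1,...,u^L satisfy the gradient flow of a deep diagonal linear network, and assume that for every component i ∈ [d] the minimizer of k ↦ |u^k_i(0)| is unique (attained at layer k_i). Then for all t ≥ 0 and all i ∈ [d], Σ_{j=1}^L Π_{k≠j} u^k_i(t)^2 ≥ Π_{k≠k_i} (u^k_i(0)^2 - u^{k_i}_i(0)^2) > 0. In particular the diagonal matrix M(t) = diag((Σ_j Π_{k≠j} u^k_i(t)^2)_i) is invertible for every t ≥ 0, with smallest eigenvalue bounded below by σ := min_i Π_{k≠k_i}(u^k_i(0)^2 - u^{k_i}_i(0)^2). -/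

import Mathlib

open Finset

/-- The gradient of `f : ℝ^d → ℝ`, given componentwise by the partial derivatives. -/
noncomputable def grad {d : ℕ} (f : (Fin d → ℝ) → ℝ) (x : Fin d → ℝ) (i : Fin d) : ℝ :=
  fderiv ℝ f x (Pi.single i 1)

/-!
Along the flow every square `u j ^ 2` has the same derivative `-2 (∏ k, u k) g`, where `g` is the
partial derivative of the loss, so the differences `u j ^ 2 - u k ^ 2` are conserved. Hence
`u j t ^ 2` never falls below its initial excess over the smallest initial square, and the single
summand at the minimizing layer already gives the bound.
-/

section

variable {ι : Type*} [Fintype ι] [DecidableEq ι]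

/-- The evolution, on the time set `S`, of one coordinate of the layers of a diagonal linear
network: `u j t` is the value at layer `j`, and `g t` stands for the partial derivative of the loss
at the network's parameter. Since `g` is arbitrary, it absorbs the coupling to the other
coordinates. -/
def IsDiagonalFlowOn (u : ι → ℝ → ℝ) (g : ℝ → ℝ) (S : Set ℝ) : Prop :=
  ∀ j, ∀ t ∈ S, HasDerivWithinAt (u j) (-((∏ k ∈ univ.erase j, u k t) * g t)) S t

namespace IsDiagonalFlowOn

variable {u : ι → ℝ → ℝ} {g : ℝ → ℝ} {S : Set ℝ} {t₀ t : ℝ}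

theorem hasDerivWithinAt_sq (hu : IsDiagonalFlowOn u g S) (j : ι) (ht : t ∈ S) :
    HasDerivWithinAt (fun s ↦ u j s ^ 2) (-(2 * (∏ k, u k t) * g t)) S t := by
  refine ((hu j t ht).pow 2).congr_deriv ?_
  rw [← mul_prod_erase univ (fun k ↦ u k t) (mem_univ j)]
  push_cast
  ring

theorem sq_sub_sq_eq (hu : IsDiagonalFlowOn u g S) (hS : Convex ℝ S) (ht₀ : t₀ ∈ S) (ht : t ∈ S)
    (j k : ι) : u j t ^ 2 - u k t ^ 2 = u j t₀ ^ 2 - u k t₀ ^ 2 := by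
  have hderiv : ∀ s ∈ S, HasDerivWithinAt (fun s ↦ u j s ^ 2 - u k s ^ 2) 0 S s := fun s hs ↦
    ((hu.hasDerivWithinAt_sq j hs).sub (hu.hasDerivWithinAt_sq k hs)).congr_deriv (sub_self _)
  have hnorm := hS.norm_image_sub_le_of_norm_hasDerivWithin_le (C := 0) hderiv
    (fun _ _ ↦ norm_zero.le) ht₀ ht
  rw [zero_mul] at hnorm
  exact sub_eq_zero.mp (norm_le_zero_iff.mp hnorm)

theorem sq_sub_sq_le_sq (hu : IsDiagonalFlowOn u g S) (hS : Convex ℝ S) (ht₀ : t₀ ∈ S) (ht : t ∈ S)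
    (j k : ι) : u j t₀ ^ 2 - u k t₀ ^ 2 ≤ u j t ^ 2 :=
  (hu.sq_sub_sq_eq hS ht₀ ht j k).symm.trans_le (sub_le_self _ (sq_nonneg _))

end IsDiagonalFlowOn

theorem prod_erase_le_sum_prod_erase {R : Type*} [CommSemiring R] [PartialOrder R]
    [IsOrderedRing R] {a b : ι → R} (k : ι) (ha : ∀ j ≠ k, 0 ≤ a j) (hab : ∀ j ≠ k, a j ≤ b j)
    (hb : ∀ j, 0 ≤ b j) : ∏ j ∈ univ.erase k, a j ≤ ∑ i, ∏ j ∈ univ.erase i, b j :=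
  calc ∏ j ∈ univ.erase k, a j
      ≤ ∏ j ∈ univ.erase k, b j :=
        prod_le_prod (fun j hj ↦ ha j (ne_of_mem_erase hj)) fun j hj ↦ hab j (ne_of_mem_erase hj)
    _ ≤ ∑ i, ∏ j ∈ univ.erase i, b j :=
        single_le_sum (f := fun i ↦ ∏ j ∈ univ.erase i, b j)
          (fun _ _ ↦ prod_nonneg fun j _ ↦ hb j) (mem_univ k)

theorem stmt_6_general {u : ι → ℝ → ℝ} {g : ℝ → ℝ} {S : Set ℝ} {t₀ t : ℝ}
    (hu : IsDiagonalFlowOn u g S) (hS : Convex ℝ S) (ht₀ : t₀ ∈ S) (ht : t ∈ S) (k : ι)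
    (hk : ∀ j ≠ k, |u k t₀| < |u j t₀|) :
    ∏ j ∈ univ.erase k, (u j t₀ ^ 2 - u k t₀ ^ 2) ≤ ∑ i, ∏ j ∈ univ.erase i, u j t ^ 2 ∧
      0 < ∏ j ∈ univ.erase k, (u j t₀ ^ 2 - u k t₀ ^ 2) := by
  have hpos : ∀ j ≠ k, 0 < u j t₀ ^ 2 - u k t₀ ^ 2 := fun j hj ↦
    sub_pos.mpr (sq_lt_sq.mpr (hk j hj))
  exact ⟨prod_erase_le_sum_prod_erase k (fun j hj ↦ (hpos j hj).le)
      (fun j _ ↦ hu.sq_sub_sq_le_sq hS ht₀ ht j k) fun _ ↦ sq_nonneg _,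
    prod_pos fun j hj ↦ hpos j (ne_of_mem_erase hj)⟩

end

theorem stmt_6 {L d : ℕ} (u : Fin L → ℝ → Fin d → ℝ) (Loss : (Fin d → ℝ) → ℝ)
    (hLoss : ContDiff ℝ 1 Loss)
    (θ : ℝ → Fin d → ℝ) (hθ : ∀ t i, θ t i = ∏ j, u j t i)
    (hflow : ∀ j, ∀ t ≥ (0:ℝ), ∀ i,
      HasDerivAt (fun s => u j s i)
        (-((∏ k ∈ Finset.univ.erase j, u k t i) * grad Loss (θ t) i)) t)
    (kmin : Fin d → Fin L)
    (hkmin : ∀ i, ∀ k : Fin L, k ≠ kmin i → |u (kmin i) 0 i| < |u k 0 i|) :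
    ∀ t ≥ (0:ℝ), ∀ i,
      (∏ k ∈ Finset.univ.erase (kmin i), (u k 0 i ^ 2 - u (kmin i) 0 i ^ 2))
          ≤ ∑ j, ∏ k ∈ Finset.univ.erase j, u k t i ^ 2 ∧
      0 < ∏ k ∈ Finset.univ.erase (kmin i), (u k 0 i ^ 2 - u (kmin i) 0 i ^ 2) := by
  intro t ht i
  have hu : IsDiagonalFlowOn (fun j s ↦ u j s i) (fun s ↦ grad Loss (θ s) i) (Set.Ici 0) :=
    fun j s hs ↦ (hflow j s hs i).hasDerivWithinAt
  exact stmt_6_general hu (convex_Ici 0) Set.self_mem_Ici ht (kmin i) (hkmin i)
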